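/- arXiv:2408.06655 — 2 statements merged into one kernel-verified Lean document; each statement's English description precedes it below -/
import Mathlib

section
/- Norm and quadratic-form bounds for the compact operator B (part of Lemma 5.2): For every periodic grid function v on ZMod N with mesh size h > 0, one has (1/3)‖v‖ ≤ ‖B v‖ ≤ ‖v‖ and (1/3)‖v‖² ≤ (B v, v) ≤ ‖v‖², where B v = v + (h²/6) δ² v. -/
/-- Second-order central difference operator on periodic grid functions. -/
noncomputable def delta2 (N : ℕ) (h : ℝ) (v : ZMod N → ℝ) : ZMod N → ℝ :=
  fun i => (v (i + 1) - 2 * v i + v (i - 1)) / h ^ 2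

/-- Fourth-order compact operator `B = I + (h²/6) δ²`. -/
noncomputable def Bop (N : ℕ) (h : ℝ) (v : ZMod N → ℝ) : ZMod N → ℝ :=
  fun i => v i + h ^ 2 / 6 * delta2 N h v i

/-- Discrete L² inner product `(v, w) = h ∑ᵢ vᵢ wᵢ`. -/
noncomputable def ip (N : ℕ) [NeZero N] (h : ℝ) (v w : ZMod N → ℝ) : ℝ :=
  h * ∑ i, v i * w i

/-- Discrete L² norm `‖v‖ = √(v, v)`. -/
noncomputable def nrm (N : ℕ) [NeZero N] (h : ℝ) (v : ZMod N → ℝ) : ℝ :=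
  Real.sqrt (ip N h v v)

/-!
Writing `τ` for the unit shift, `B v` is the point one third of the way from `v` to the mean of the
two shifts `τ v` and `τ⁻¹ v`. Shifts preserve the norm, so this mean `a` satisfies `‖a‖ ≤ ‖v‖`, and
the bounds hold for any such `a`: those on `‖B v‖` follow from convexity of balls and the triangle
inequality, those on `(B v, v)` from Cauchy–Schwarz.
-/

open AffineMap WithLp
open scoped translate

section LineMap

variable {E : Type*} [SeminormedAddCommGroup E]

theorem norm_lineMap_le [NormedSpace ℝ E] {x a : E} {r t : ℝ} (hx : ‖x‖ ≤ r) (ha : ‖a‖ ≤ r)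
    (ht : t ∈ Set.Icc 0 1) : ‖lineMap x a t‖ ≤ r := by
  rw [← mem_closedBall_zero_iff] at hx ha ⊢
  exact (convex_closedBall 0 r).lineMap_mem hx ha ht

theorem le_norm_lineMap [NormedSpace ℝ E] {x a : E} {t : ℝ} (ha : ‖a‖ ≤ ‖x‖) (ht : 0 ≤ t) :
    (1 - 2 * t) * ‖x‖ ≤ ‖lineMap x a t‖ := by
  have hdist : ‖x - lineMap x a t‖ ≤ t * (2 * ‖x‖) := by
    rw [← dist_eq_norm, dist_left_lineMap, Real.norm_of_nonneg ht, dist_eq_norm]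
    gcongr
    linarith [norm_sub_le x a]
  linarith [norm_le_norm_add_norm_sub (lineMap x a t) x, norm_sub_rev x (lineMap x a t)]

variable [InnerProductSpace ℝ E] {x a : E} {t : ℝ}

theorem real_inner_lineMap_left (x a y : E) (t : ℝ) :
    inner ℝ (lineMap x a t) y = (1 - t) * inner ℝ x y + t * inner ℝ a y := by
  rw [lineMap_apply_module, inner_add_left, real_inner_smul_left, real_inner_smul_left]

theorem abs_real_inner_le_norm_sq (ha : ‖a‖ ≤ ‖x‖) : |inner ℝ a x| ≤ ‖x‖ ^ 2 :=
  calc |inner ℝ a x| ≤ ‖a‖ * ‖x‖ := abs_real_inner_le_norm a x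
    _ ≤ ‖x‖ * ‖x‖ := by gcongr
    _ = ‖x‖ ^ 2 := (sq _).symm

theorem real_inner_lineMap_self_le (ha : ‖a‖ ≤ ‖x‖) (ht : 0 ≤ t) :
    inner ℝ (lineMap x a t) x ≤ ‖x‖ ^ 2 := by
  have hle : inner ℝ a x ≤ ‖x‖ ^ 2 := (abs_le.mp (abs_real_inner_le_norm_sq ha)).2
  rw [real_inner_lineMap_left, real_inner_self_eq_norm_sq]
  linarith [mul_le_mul_of_nonneg_left hle ht]

theorem le_real_inner_lineMap_self (ha : ‖a‖ ≤ ‖x‖) (ht : 0 ≤ t) :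
    (1 - 2 * t) * ‖x‖ ^ 2 ≤ inner ℝ (lineMap x a t) x := by
  have hge : -‖x‖ ^ 2 ≤ inner ℝ a x := (abs_le.mp (abs_real_inner_le_norm_sq ha)).1
  rw [real_inner_lineMap_left, real_inner_self_eq_norm_sq]
  linarith [mul_le_mul_of_nonneg_left hge ht]

end LineMap

theorem norm_toLp_translate {G E : Type*} [AddCommGroup G] [Fintype G] [SeminormedAddCommGroup E]
    (p : ENNReal) [Fact (1 ≤ p)] (g : G) (f : G → E) : ‖toLp p (τ g f)‖ = ‖toLp p f‖ :=
  (LinearIsometryEquiv.piLpCongrLeft p ℤ E (Equiv.subRight g).symm).norm_map (toLp p f)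

section Grid

variable {N : ℕ} {h : ℝ}

theorem Bop_eq_lineMap (hh : h ≠ 0) (v : ZMod N → ℝ) :
    Bop N h v = lineMap v (midpoint ℝ (τ 1 v) (τ (-1) v)) (1 / 3 : ℝ) := by
  ext i
  simp only [Bop, delta2, lineMap_apply_module, midpoint_eq_smul_add, Pi.add_apply, Pi.smul_apply,
    translate_apply, sub_neg_eq_add, smul_eq_mul, invOf_eq_inv]
  field_simp
  ring

variable [NeZero N]

theorem exists_toLp_Bop_eq_lineMap (hh : h ≠ 0) (v : ZMod N → ℝ) :
    ∃ a : EuclideanSpace ℝ (ZMod N), ‖a‖ ≤ ‖toLp 2 v‖ ∧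
      toLp 2 (Bop N h v) = lineMap (toLp 2 v) a (1 / 3 : ℝ) := by
  refine ⟨midpoint ℝ (toLp 2 (τ 1 v)) (toLp 2 (τ (-1) v)), ?_, ?_⟩
  · exact norm_lineMap_le (norm_toLp_translate 2 1 v).le (norm_toLp_translate 2 (-1) v).le
      (by norm_num)
  · rw [Bop_eq_lineMap hh]
    rfl

theorem ip_eq_mul_inner (h : ℝ) (v w : ZMod N → ℝ) :
    ip N h v w = h * inner ℝ (toLp 2 v) (toLp 2 w) := by
  simp [ip, PiLp.inner_apply, mul_comm]

theorem nrm_eq_sqrt_mul_norm (h : ℝ) (v : ZMod N → ℝ) : nrm N h v = √h * ‖toLp 2 v‖ := by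
  rw [nrm, ip_eq_mul_inner, real_inner_self_eq_norm_sq, Real.sqrt_mul' h (sq_nonneg _),
    Real.sqrt_sq (norm_nonneg _)]

theorem nrm_sq (hh : 0 ≤ h) (v : ZMod N → ℝ) : nrm N h v ^ 2 = h * ‖toLp 2 v‖ ^ 2 := by
  rw [nrm_eq_sqrt_mul_norm, mul_pow, Real.sq_sqrt hh]

end Grid

/-- Norm and quadratic-form bounds for the compact operator `B`
(part of Lemma 5.2): `(1/3)‖v‖ ≤ ‖B v‖ ≤ ‖v‖` and `(1/3)‖v‖² ≤ (B v, v) ≤ ‖v‖²`. -/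
theorem Bop_norm_and_quadratic_form_bounds
    (N : ℕ) [NeZero N] (h : ℝ) (hh : 0 < h) (v : ZMod N → ℝ) :
    1 / 3 * nrm N h v ≤ nrm N h (Bop N h v)
      ∧ nrm N h (Bop N h v) ≤ nrm N h v
      ∧ 1 / 3 * nrm N h v ^ 2 ≤ ip N h (Bop N h v) v
      ∧ ip N h (Bop N h v) v ≤ nrm N h v ^ 2 := by
  obtain ⟨a, ha, hB⟩ := exists_toLp_Bop_eq_lineMap hh.ne' v
  have ht : (0 : ℝ) ≤ 1 / 3 := by norm_num
  rw [nrm_sq hh.le, nrm_eq_sqrt_mul_norm, nrm_eq_sqrt_mul_norm, ip_eq_mul_inner, hB,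
    mul_left_comm _ (√h), mul_left_comm _ h]
  refine ⟨?_, ?_, ?_, ?_⟩ <;> gcongr
  · linarith [le_norm_lineMap ha ht]
  · exact norm_lineMap_le le_rfl ha ⟨ht, by norm_num⟩
  · linarith [le_real_inner_lineMap_self ha ht]
  · exact real_inner_lineMap_self_le ha ht
end

section
/- Discrete L²-norm estimate for the KKT correction step (key inequality (5.17)–(5.20) in the error analysis): Let m < M, τ > 0, H(s) = (M − s)(s − m). Let u*, u, ū, λ be periodic grid functions such that for every index i: m ≤ u*_i ≤ M, u_i − ū_i = τ λ_i H'(u_i), λ_i ≥ 0, H(u_i) ≥ 0, and λ_i H(u_i) = 0. Then ‖u* − u‖ ≤ ‖u* − ū‖ in the discrete L² norm. -/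
/-!
Concavity of `H` gives `H(u*) ≤ H(u) + H'(u)(u* − u)`. Multiplying by `λ ≥ 0` and using
`λ H(u) = 0 ≤ H(u*)`, we get `λ H'(u)(u* − u) ≥ 0`: the correction `u − ū = τ λ H'(u)` never makes
an obtuse angle with `u* − u`. Hence in
`‖u* − ū‖² = ‖u* − u‖² + 2 (u* − u, u − ū) + ‖u − ū‖²` the last two terms are nonnegative.
-/

open Set

section DiscreteInnerProduct

variable {N : ℕ} [NeZero N] {h : ℝ} {v w : ZMod N → ℝ}

theorem ip_add_self (h : ℝ) (v w : ZMod N → ℝ) :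
    ip N h (v + w) (v + w) = ip N h v v + 2 * ip N h v w + ip N h w w := by
  simp only [ip, Pi.add_apply, Finset.mul_sum, ← Finset.sum_add_distrib]
  exact Finset.sum_congr rfl fun i _ => by ring

theorem ip_nonneg (hh : 0 ≤ h) (hvw : ∀ i, 0 ≤ v i * w i) : 0 ≤ ip N h v w :=
  mul_nonneg hh (Finset.sum_nonneg fun i _ => hvw i)

theorem ip_self_nonneg (hh : 0 ≤ h) (v : ZMod N → ℝ) : 0 ≤ ip N h v v :=
  ip_nonneg hh fun i => mul_self_nonneg (v i)

theorem nrm_le_nrm_add_of_ip_nonneg (hh : 0 ≤ h) (hvw : 0 ≤ ip N h v w) :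
    nrm N h v ≤ nrm N h (v + w) := by
  refine Real.sqrt_le_sqrt ?_
  rw [ip_add_self]
  linarith [ip_self_nonneg hh w]

end DiscreteInnerProduct

section ConcaveConstraint

variable {S : Set ℝ} {f : ℝ → ℝ} {f' x y : ℝ}

theorem concaveOn_le_tangent (hf : ConcaveOn ℝ S f) (hx : x ∈ S) (hy : y ∈ S)
    (hf' : HasDerivWithinAt f f' S x) : f y ≤ f x + f' * (y - x) := by
  rcases lt_trichotomy x y with hxy | rfl | hyx
  · have hslope : (f y - f x) / (y - x) ≤ f' := by
      simpa only [slope_def_field] using hf.slope_le_of_hasDerivWithinAt hx hy hxy hf'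
    linarith [(div_le_iff₀ (sub_pos.2 hxy)).1 hslope]
  · simp
  · have hslope : f' ≤ (f x - f y) / (x - y) := by
      simpa only [slope_def_field] using hf.le_slope_of_hasDerivWithinAt hy hx hyx hf'
    linarith [(le_div_iff₀ (sub_pos.2 hyx)).1 hslope]

theorem multiplier_mul_deriv_mul_sub_nonneg {c : ℝ} (hf : ConcaveOn ℝ S f) (hx : x ∈ S)
    (hy : y ∈ S) (hf' : HasDerivWithinAt f f' S x) (hfy : 0 ≤ f y) (hc : 0 ≤ c)
    (hcf : c * f x = 0) : 0 ≤ c * f' * (y - x) :=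
  calc
    0 ≤ c * f y := mul_nonneg hc hfy
    _ ≤ c * (f x + f' * (y - x)) :=
      mul_le_mul_of_nonneg_left (concaveOn_le_tangent hf hx hy hf') hc
    _ = c * f' * (y - x) := by rw [mul_add, hcf, zero_add, mul_assoc]

end ConcaveConstraint

/-- The quadratic bound-enforcing function `H(s) = (M − s)(s − m)`: the bounds `m ≤ s ≤ M` are
encoded by the single concave constraint `0 ≤ H(s)`. -/
def boundEnforcing (m M s : ℝ) : ℝ :=
  (M - s) * (s - m)

theorem boundEnforcing_nonneg {m M s : ℝ} (hms : m ≤ s) (hsM : s ≤ M) :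
    0 ≤ boundEnforcing m M s :=
  mul_nonneg (sub_nonneg.2 hsM) (sub_nonneg.2 hms)

theorem hasDerivAt_boundEnforcing (m M s : ℝ) :
    HasDerivAt (boundEnforcing m M) (M + m - 2 * s) s :=
  (((hasDerivAt_id' s).const_sub M).mul ((hasDerivAt_id' s).sub_const m)).congr_deriv (by ring)

theorem concaveOn_boundEnforcing (m M : ℝ) : ConcaveOn ℝ univ (boundEnforcing m M) := by
  have hderiv : deriv (boundEnforcing m M) = fun s => M + m - 2 * s :=
    funext fun s => (hasDerivAt_boundEnforcing m M s).deriv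
  refine Antitone.concaveOn_univ_of_deriv
    (fun s => (hasDerivAt_boundEnforcing m M s).differentiableAt) ?_
  rw [hderiv]
  intro s t hst
  dsimp only
  linarith

theorem kkt_correction_l2_nonexpansive_general
    {N : ℕ} [NeZero N] {h τ : ℝ} (hh : 0 ≤ h) (hτ : 0 ≤ τ) {H H' : ℝ → ℝ}
    (hconc : ConcaveOn ℝ univ H) (hderiv : ∀ s, HasDerivAt H (H' s) s)
    {ustar u ubar lam : ZMod N → ℝ} (hustar : ∀ i, 0 ≤ H (ustar i))
    (heq : ∀ i, u i - ubar i = τ * (lam i * H' (u i)))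
    (hlam : ∀ i, 0 ≤ lam i) (hcomp : ∀ i, lam i * H (u i) = 0) :
    nrm N h (ustar - u) ≤ nrm N h (ustar - ubar) := by
  have hangle : 0 ≤ ip N h (ustar - u) (u - ubar) := by
    refine ip_nonneg hh fun i => ?_
    have hnormal : 0 ≤ lam i * H' (u i) * (ustar i - u i) :=
      multiplier_mul_deriv_mul_sub_nonneg hconc (mem_univ _) (mem_univ _)
        (hderiv (u i)).hasDerivWithinAt (hustar i) (hlam i) (hcomp i)
    calc
      0 ≤ τ * (lam i * H' (u i) * (ustar i - u i)) := mul_nonneg hτ hnormal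
      _ = (ustar i - u i) * (u i - ubar i) := by rw [heq i]; ring
  simpa only [sub_add_sub_cancel] using nrm_le_nrm_add_of_ip_nonneg hh hangle

/-- Discrete L²-norm estimate for the KKT correction step (key inequality
(5.17)–(5.20)): with `H(s) = (M − s)(s − m)` and `H'(s) = M + m − 2s`, if
pointwise `m ≤ u*ᵢ ≤ M`, `uᵢ − ūᵢ = τ λᵢ H'(uᵢ)`, `λᵢ ≥ 0`, `H(uᵢ) ≥ 0` and
`λᵢ H(uᵢ) = 0`, then `‖u* − u‖ ≤ ‖u* − ū‖`. -/
theorem kkt_correction_l2_nonexpansive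
    (N : ℕ) [NeZero N] (h m M τ : ℝ) (hh : 0 < h) (hmM : m < M) (hτ : 0 < τ)
    (ustar u ubar lam : ZMod N → ℝ)
    (hlo : ∀ i : ZMod N, m ≤ ustar i) (hhi : ∀ i : ZMod N, ustar i ≤ M)
    (heq : ∀ i : ZMod N, u i - ubar i = τ * (lam i * (M + m - 2 * u i)))
    (hlam : ∀ i : ZMod N, 0 ≤ lam i)
    (hH : ∀ i : ZMod N, 0 ≤ (M - u i) * (u i - m))
    (hcomp : ∀ i : ZMod N, lam i * ((M - u i) * (u i - m)) = 0) :
    nrm N h (fun i => ustar i - u i) ≤ nrm N h (fun i => ustar i - ubar i) :=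
  kkt_correction_l2_nonexpansive_general hh.le hτ.le (concaveOn_boundEnforcing m M)
    (hasDerivAt_boundEnforcing m M) (fun i => boundEnforcing_nonneg (hlo i) (hhi i)) heq hlam hcomp
end
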